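/- Let (X₁, X₂) be distributed according to the uniform probability measure P on the region Ω = {(x₁, x₂) ∈ [0,1]² : x₂ ≥ 4x₁(1 − x₁)} (density 3 on Ω), and let f(x₁, x₂) = |4x₁ − 2| · (|4x₂ − 2| + 1)/2. Then the main effect Sobol' index of x₂, namely S_{x₂} = Var( E_P[f(X₁, X₂) | X₂] ) / Var_P(f), equals −(3/2)·(264√2 − 293)/(144√2 − 521). -/

import Mathlib

/-!
Write `s = √(1 - y)`. Since `4x(1 - x) ≤ y` means `s ≤ |2x - 1|`, the section of the region at
height `y` is `[0,1]` minus the open interval of length `s` centred at `1/2`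
(`integral_parabRegion`). Integrating `1`, `|4x - 2|`, `|4x - 2|²` over it gives `1 - s`, `1 - s²`
and `4/3 · (1 - s³)`, so the conditional mean of `f = |4x₁ - 2| · w(x₂)` is
`(1 - s²) / (1 - s) · w(y) = (1 + s) · w(y)`, the function `condMean`; `setIntegral_condMean`
checks the defining property of the conditional expectation.

The means and second moments become integrals over `y ∈ [0,1]` of expressions in `s` and `w(y)`.
On either side of the kink `y = 1/2` these are polynomials in `s`, and the substitution
`dy = -2 s ds` (`integral_sqrt_poly_split`) evaluates them. Both means are `3/2`, and the variances
are `Var f = 521/1260 - (4/35)√2` and `Var E[f | X₂] = (11/35)√2 - 293/840`.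
-/

open MeasureTheory ProbabilityTheory Set

/-- The region of the unit square above the parabola `x₂ = 4x₁(1 − x₁)`. -/
def parabRegion : Set (ℝ × ℝ) :=
  {q : ℝ × ℝ | q.1 ∈ Icc (0 : ℝ) 1 ∧ q.2 ∈ Icc (0 : ℝ) 1 ∧ 4 * q.1 * (1 - q.1) ≤ q.2}

lemma isCompact_parabRegion : IsCompact parabRegion := by
  have h : parabRegion = (Icc (0 : ℝ) 1 ×ˢ Icc (0 : ℝ) 1) ∩
      {q : ℝ × ℝ | 4 * q.1 * (1 - q.1) ≤ q.2} := by
    ext q; simp only [parabRegion, mem_ofPred_eq, mem_inter_iff, mem_prod, and_assoc]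
  rw [h]
  exact (isCompact_Icc.prod isCompact_Icc).inter_right
    (isClosed_le (by fun_prop) (by fun_prop))

lemma integrableOn_parabRegion {F : ℝ × ℝ → ℝ} (hF : Continuous F) :
    IntegrableOn F parabRegion :=
  hF.continuousOn.integrableOn_compact isCompact_parabRegion

/-- Integral of `g` over the interval of length `r` centred at `1/2`. -/
noncomputable def midIntegral (g : ℝ → ℝ) (r : ℝ) : ℝ := ∫ x in ((1 - r) / 2)..((1 + r) / 2), g x

/-- Fubini on the region: the section at height `y ∈ [0,1]` is `[0,1]` with the open interval of
length `√(1 - y)` centred at `1/2` removed. -/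
lemma integral_parabRegion (g φ : ℝ → ℝ) (hg : Continuous g)
    (hint : IntegrableOn (fun q : ℝ × ℝ => g q.1 * φ q.2) parabRegion) :
    ∫ q in parabRegion, g q.1 * φ q.2 =
      ∫ y in (0 : ℝ)..1, (midIntegral g 1 - midIntegral g (√(1 - y))) * φ y := by
  have hm := isCompact_parabRegion.measurableSet
  rw [← integral_indicator hm, Measure.volume_eq_prod, integral_prod_symm _
    (by rw [← Measure.volume_eq_prod]; exact (integrable_indicator_iff hm).2 hint),
    intervalIntegral.integral_of_le zero_le_one, ← integral_Icc_eq_integral_Ioc,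
    ← integral_indicator measurableSet_Icc]
  congr 1
  ext y
  by_cases hy : y ∈ Icc (0 : ℝ) 1
  · rw [indicator_of_mem hy]
    have hs0 : 0 ≤ √(1 - y) := Real.sqrt_nonneg _
    have hs2 : √(1 - y) ^ 2 = 1 - y := Real.sq_sqrt (by linarith [hy.2])
    have hs1 : √(1 - y) ≤ 1 := by nlinarith [hy.1]
    set s := √(1 - y)
    have hsec : (fun x => parabRegion.indicator (fun q : ℝ × ℝ => g q.1 * φ q.2) (x, y)) =
        (Icc (0 : ℝ) 1 \ Ioo ((1 - s) / 2) ((1 + s) / 2)).indicator (fun x => g x * φ y) := by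
      ext x
      have : (x, y) ∈ parabRegion ↔ x ∈ Icc (0 : ℝ) 1 \ Ioo ((1 - s) / 2) ((1 + s) / 2) := by
        -- both conditions say `s ^ 2 ≤ (2 * x - 1) ^ 2`
        have : 4 * x * (1 - x) ≤ y ↔ ¬ ((1 - s) / 2 < x ∧ x < (1 + s) / 2) := by
          constructor
          · rintro h ⟨h1, h2⟩
            nlinarith
          · intro h
            by_contra h'
            have : |2 * x - 1| < s := abs_lt_of_sq_lt_sq (by nlinarith) hs0
            rw [abs_lt] at this
            exact h ⟨by linarith, by linarith⟩
        simp only [parabRegion, mem_ofPred_eq, mem_sdiff, mem_Ioo, this, hy, true_and]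
      by_cases hx : (x, y) ∈ parabRegion
      · rw [indicator_of_mem hx, indicator_of_mem (this.1 hx)]
      · rw [indicator_of_notMem hx, indicator_of_notMem (fun h => hx (this.2 h))]
    rw [hsec, integral_indicator (measurableSet_Icc.diff measurableSet_Ioo), integral_mul_const,
      setIntegral_sdiff measurableSet_Ioo (hg.integrableOn_Icc)
        (Ioo_subset_Icc_self.trans (Icc_subset_Icc (by linarith) (by linarith))),
      integral_Icc_eq_integral_Ioc, ← integral_Ioc_eq_integral_Ioo, midIntegral, midIntegral,
      intervalIntegral.integral_of_le (by linarith), intervalIntegral.integral_of_le (by linarith)]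
    norm_num
  · rw [indicator_of_notMem hy]
    have : (fun x => parabRegion.indicator (fun q : ℝ × ℝ => g q.1 * φ q.2) (x, y)) = 0 := by
      ext x
      exact indicator_of_notMem (fun h => hy h.2.1) _
    rw [this]; simp

lemma midIntegral_one (r : ℝ) : midIntegral (fun _ => 1) r = r := by
  simp only [midIntegral, intervalIntegral.integral_const, smul_eq_mul]
  ring

lemma midIntegral_abs {r : ℝ} (hr : 0 ≤ r) : midIntegral (fun x => |4 * x - 2|) r = r ^ 2 := by
  have hc : Continuous fun x : ℝ => |4 * x - 2| := by fun_prop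
  rw [midIntegral, ← intervalIntegral.integral_add_adjacent_intervals (b := 1 / 2)
    (hc.intervalIntegrable _ _) (hc.intervalIntegrable _ _)]
  have h1 : ∫ x in ((1 - r) / 2)..(1 / 2), |4 * x - 2| =
      ∫ x in ((1 - r) / 2)..(1 / 2), 2 - 4 * x := by
    refine intervalIntegral.integral_congr fun x hx => ?_
    rw [uIcc_of_le (by linarith)] at hx
    rw [abs_of_nonpos (by linarith [hx.2])]; ring
  have h2 : ∫ x in (1 / 2)..((1 + r) / 2), |4 * x - 2| =
      ∫ x in (1 / 2)..((1 + r) / 2), 4 * x - 2 := by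
    refine intervalIntegral.integral_congr fun x hx => ?_
    rw [uIcc_of_le (by linarith)] at hx
    rw [abs_of_nonneg (by linarith [hx.1])]
  have hi : ∀ (φ : ℝ → ℝ) (a b : ℝ), Continuous φ → IntervalIntegrable φ volume a b :=
    fun φ a b h => h.intervalIntegrable a b
  rw [h1, h2, intervalIntegral.integral_sub (hi _ _ _ (by fun_prop)) (hi _ _ _ (by fun_prop)),
    intervalIntegral.integral_sub (hi _ _ _ (by fun_prop)) (hi _ _ _ (by fun_prop)),
    intervalIntegral.integral_const_mul, intervalIntegral.integral_const_mul, integral_id,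
    integral_id]
  simp only [intervalIntegral.integral_const, smul_eq_mul]
  ring

lemma midIntegral_sq (r : ℝ) : midIntegral (fun x => |4 * x - 2| ^ 2) r = 4 / 3 * r ^ 3 := by
  have h : ∀ x ∈ uIcc ((1 - r) / 2) ((1 + r) / 2),
      HasDerivAt (fun x : ℝ => (4 * x - 2) ^ 3 / 12) (|4 * x - 2| ^ 2) x := fun x _ => by
    have := ((((hasDerivAt_id x).const_mul 4).sub_const 2).pow 3).div_const 12
    refine this.congr_deriv ?_
    simp only [sq_abs, id]
    norm_num
    ring
  rw [midIntegral, intervalIntegral.integral_eq_sub_of_hasDerivAt h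
    (Continuous.intervalIntegrable (by fun_prop) _ _)]
  ring

/-- The factor of the g-function that depends on `x₂`. -/
noncomputable def gFactor (y : ℝ) : ℝ := (|4 * y - 2| + 1) / 2

/-- The conditional expectation of the g-function given `X₂ = y`. -/
noncomputable def condMean (y : ℝ) : ℝ := (1 + √(1 - y)) * gFactor y

lemma continuous_gFactor : Continuous gFactor := by unfold gFactor; fun_prop

lemma continuous_condMean : Continuous condMean := by
  unfold condMean; have := continuous_gFactor; fun_prop

/-- Substitution `s = √(1 - y)`, i.e. `dy = -2 s ds`, for an integrand polynomial in `s`. -/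
lemma integral_sqrt_poly {a b : ℝ} (hab : a ≤ b) (hb : b ≤ 1) (Q : Polynomial ℝ) {g : ℝ → ℝ}
    (hg : Continuous g)
    (h : ∀ y ∈ Icc a b, Q.derivative.eval √(1 - y) = -2 * √(1 - y) * g y) :
    ∫ y in a..b, g y = Q.eval √(1 - b) - Q.eval √(1 - a) := by
  refine intervalIntegral.integral_eq_sub_of_hasDerivAt_of_le (f := fun y => Q.eval √(1 - y)) hab
    (by fun_prop) (fun y hy => ?_) (hg.intervalIntegrable _ _)
  have hpos : 0 < 1 - y := by linarith [hy.2]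
  have hs : √(1 - y) ≠ 0 := (Real.sqrt_pos.2 hpos).ne'
  have h1 := (((hasDerivAt_id y).const_sub 1).sqrt hpos.ne')
  have h2 := (Q.hasDerivAt √(1 - y)).comp y h1
  refine h2.congr_deriv ?_
  rw [h y (Ioo_subset_Icc_self hy)]
  simp only [id]
  field_simp

/-- As `integral_sqrt_poly` on `[0,1]`, with separate primitives `A`, `B` on the two sides of the
kink of `gFactor` at `y = 1/2`, i.e. at `s = √2/2`. -/
lemma integral_sqrt_poly_split (A B : Polynomial ℝ) (G : ℝ → ℝ → ℝ)
    (hG : Continuous fun y => G √(1 - y) (gFactor y))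
    (hA : ∀ s, A.derivative.eval s = -2 * s * G s ((4 * s ^ 2 - 1) / 2))
    (hB : ∀ s, B.derivative.eval s = -2 * s * G s ((3 - 4 * s ^ 2) / 2)) :
    ∫ y in (0 : ℝ)..1, G √(1 - y) (gFactor y) =
      A.eval (√2 / 2) - A.eval 1 + (B.eval 0 - B.eval (√2 / 2)) := by
  have hhalf : √(1 - 1 / 2 : ℝ) = √2 / 2 := by
    rw [Real.sqrt_eq_iff_mul_self_eq (by norm_num) (by positivity)]
    nlinarith [Real.sq_sqrt (show (0 : ℝ) ≤ 2 by norm_num)]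
  rw [← intervalIntegral.integral_add_adjacent_intervals (b := 1 / 2)
    (hG.intervalIntegrable _ _) (hG.intervalIntegrable _ _),
    integral_sqrt_poly (by norm_num) (by norm_num) A hG,
    integral_sqrt_poly (by norm_num) (by norm_num) B hG, hhalf]
  · norm_num
  · intro y hy
    rw [hB, Real.sq_sqrt (by linarith [hy.2]), gFactor, abs_of_nonneg (by linarith [hy.1])]
    ring_nf
  · intro y hy
    rw [hA, Real.sq_sqrt (by linarith [hy.2]), gFactor, abs_of_nonpos (by linarith [hy.2])]
    ring_nf

lemma sqrt_two_half_sq : (√2 / 2 : ℝ) ^ 2 = 1 / 2 := by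
  rw [div_pow, Real.sq_sqrt (by norm_num)]; norm_num

open Polynomial in
lemma integral_mass : ∫ y in (0 : ℝ)..1, (1 - √(1 - y)) = 1 / 3 := by
  rw [integral_sqrt_poly zero_le_one le_rfl (C (-1) * X ^ 2 + C (2 / 3) * X ^ 3) (by fun_prop)]
  · simp; norm_num
  · intro y _; simp; ring

open Polynomial in
lemma integral_mean : ∫ y in (0 : ℝ)..1, (1 - √(1 - y) ^ 2) * gFactor y = 1 / 2 := by
  have := continuous_gFactor
  rw [integral_sqrt_poly_split
    (C (1/2) * X^2 + C (-5/4) * X^4 + C (2/3) * X^6)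
    (C (-3/2) * X^2 + C (7/4) * X^4 + C (-2/3) * X^6)
    (fun s w => (1 - s ^ 2) * w) (by fun_prop)]
  · have := sqrt_two_half_sq
    simp only [eval_add, eval_mul, eval_C, eval_pow, eval_X]
    generalize (√2 / 2 : ℝ) = r at *
    grind
  · intro s; simp; ring
  · intro s; simp; ring

open Polynomial in
lemma integral_sq : ∫ y in (0 : ℝ)..1, (4 / 3 - 4 / 3 * √(1 - y) ^ 3) * gFactor y ^ 2
    = 839 / 945 - 4 / 105 * √2 := by
  have := continuous_gFactor
  rw [integral_sqrt_poly_split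
    (C (-1/3) * X^2 + C (4/3) * X^4 + C (2/15) * X^5 + C (-16/9) * X^6 + C (-16/21) * X^7
      + C (32/27) * X^9)
    (C (-3) * X^2 + C (4) * X^4 + C (6/5) * X^5 + C (-16/9) * X^6 + C (-16/7) * X^7
      + C (32/27) * X^9)
    (fun s w => (4 / 3 - 4 / 3 * s ^ 3) * w ^ 2) (by fun_prop)]
  · have := sqrt_two_half_sq
    simp only [eval_add, eval_mul, eval_C, eval_pow, eval_X]
    have h2 : √2 = 2 * (√2 / 2) := by ring
    generalize (√2 / 2 : ℝ) = r at *
    grind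
  · intro s; simp; ring
  · intro s; simp; ring

open Polynomial in
lemma integral_condMean_sq :
    ∫ y in (0 : ℝ)..1, (1 - √(1 - y)) * condMean y ^ 2 = 1597 / 2520 + 11 / 105 * √2 := by
  have := continuous_gFactor
  unfold condMean
  rw [integral_sqrt_poly_split
    (C (-1/4) * X^2 + C (-1/6) * X^3 + C (9/8) * X^4 + C (9/10) * X^5 + C (-2) * X^6
      + C (-12/7) * X^7 + C (1) * X^8 + C (8/9) * X^9)
    (C (-9/4) * X^2 + C (-3/2) * X^3 + C (33/8) * X^4 + C (33/10) * X^5 + C (-10/3) * X^6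
      + C (-20/7) * X^7 + C (1) * X^8 + C (8/9) * X^9)
    (fun s w => (1 - s) * ((1 + s) * w) ^ 2) (by fun_prop)]
  · have := sqrt_two_half_sq
    simp only [eval_add, eval_mul, eval_C, eval_pow, eval_X]
    have h2 : √2 = 2 * (√2 / 2) := by ring
    generalize (√2 / 2 : ℝ) = r at *
    grind
  · intro s; simp; ring
  · intro s; simp; ring

lemma integral_fst_zero (φ : ℝ → ℝ) (h : IntegrableOn (fun q : ℝ × ℝ => φ q.2) parabRegion) :
    ∫ q in parabRegion, φ q.2 = ∫ y in (0 : ℝ)..1, (1 - √(1 - y)) * φ y := by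
  have := integral_parabRegion (fun _ => 1) φ continuous_const (by simpa using h)
  simpa [midIntegral_one] using this

lemma integral_fst_abs (φ : ℝ → ℝ)
    (h : IntegrableOn (fun q : ℝ × ℝ => |4 * q.1 - 2| * φ q.2) parabRegion) :
    ∫ q in parabRegion, |4 * q.1 - 2| * φ q.2 =
      ∫ y in (0 : ℝ)..1, (1 - √(1 - y) ^ 2) * φ y := by
  rw [integral_parabRegion (fun x => |4 * x - 2|) φ (by fun_prop) h]
  simp_rw [midIntegral_abs (Real.sqrt_nonneg _), midIntegral_abs zero_le_one, one_pow]

lemma integral_fst_sq (φ : ℝ → ℝ)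
    (h : IntegrableOn (fun q : ℝ × ℝ => |4 * q.1 - 2| ^ 2 * φ q.2) parabRegion) :
    ∫ q in parabRegion, |4 * q.1 - 2| ^ 2 * φ q.2 =
      ∫ y in (0 : ℝ)..1, (4 / 3 - 4 / 3 * √(1 - y) ^ 3) * φ y := by
  rw [integral_parabRegion (fun x => |4 * x - 2| ^ 2) φ (by fun_prop) h]
  simp_rw [midIntegral_sq, one_pow, mul_one]

/-- On every horizontal strip `X₂ ∈ B`, the g-function and `condMean X₂` have the same integral:
both sections integrate to `(1 - s ^ 2) * gFactor y` with `s = √(1 - y)`. -/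
lemma setIntegral_condMean {B : Set ℝ} (hB : MeasurableSet B) :
    ∫ q in parabRegion, (Prod.snd ⁻¹' B).indicator (fun q : ℝ × ℝ => condMean q.2) q =
      ∫ q in parabRegion,
        (Prod.snd ⁻¹' B).indicator (fun q : ℝ × ℝ => |4 * q.1 - 2| * gFactor q.2) q := by
  have hc1 := continuous_gFactor
  have hc2 := continuous_condMean
  have hB' : MeasurableSet ((Prod.snd : ℝ × ℝ → ℝ) ⁻¹' B) := measurable_snd hB
  have e1 : (Prod.snd ⁻¹' B).indicator (fun q : ℝ × ℝ => condMean q.2) =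
      fun q => B.indicator condMean q.2 := rfl
  have e2 : (Prod.snd ⁻¹' B).indicator (fun q : ℝ × ℝ => |4 * q.1 - 2| * gFactor q.2) =
      fun q => |4 * q.1 - 2| * B.indicator gFactor q.2 := by
    ext q
    by_cases hq : q.2 ∈ B <;> simp [indicator, hq]
  have i1 := (integrableOn_parabRegion (F := fun q : ℝ × ℝ => condMean q.2)
    (by fun_prop)).indicator hB'
  have i2 := (integrableOn_parabRegion (F := fun q : ℝ × ℝ => |4 * q.1 - 2| * gFactor q.2)
    (by fun_prop)).indicator hB'
  rw [e1] at i1 ⊢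
  rw [e2] at i2 ⊢
  rw [integral_fst_zero _ i1, integral_fst_abs _ i2]
  congr 1
  ext y
  by_cases hy : y ∈ B
  · simp only [indicator_of_mem hy, condMean]; ring
  · simp only [indicator_of_notMem hy, mul_zero]

theorem main_effect_x2_g_function_parabolic_region
    (Ω : Set (ℝ × ℝ))
    (hΩ : Ω = {q : ℝ × ℝ | q.1 ∈ Icc (0 : ℝ) 1 ∧ q.2 ∈ Icc (0 : ℝ) 1
        ∧ 4 * q.1 * (1 - q.1) ≤ q.2})
    (P : Measure (ℝ × ℝ)) (hP : P = (3 : ENNReal) • volume.restrict Ω)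
    (f : ℝ × ℝ → ℝ) (hf : f = fun q => |4 * q.1 - 2| * (|4 * q.2 - 2| + 1) / 2) :
    variance (P[f | MeasurableSpace.comap Prod.snd inferInstance]) P / variance f P
      = -(3 / 2) * (264 * Real.sqrt 2 - 293) / (144 * Real.sqrt 2 - 521) := by
  have hc1 := continuous_gFactor
  have hc2 := continuous_condMean
  replace hΩ : Ω = parabRegion := hΩ
  replace hf : f = fun q => |4 * q.1 - 2| * gFactor q.2 := by
    rw [hf]; ext q; simp only [gFactor]; ring
  subst hΩ
  have hfc : Continuous f := by rw [hf]; fun_prop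
  have hhc : Continuous fun q : ℝ × ℝ => condMean q.2 := by fun_prop
  have hint : ∀ F : ℝ × ℝ → ℝ, Continuous F → Integrable F P := fun F hF => by
    rw [hP]; exact (integrableOn_parabRegion hF).smul_measure (by norm_num)
  have hI : ∀ F : ℝ × ℝ → ℝ, ∫ q, F q ∂P = 3 * ∫ q in parabRegion, F q := fun F => by
    rw [hP, integral_smul_measure]; simp
  have hL2 : ∀ F : ℝ × ℝ → ℝ, Continuous F → MemLp F 2 P := fun F hF =>
    (memLp_two_iff_integrable_sq hF.aestronglyMeasurable).2 (hint _ (hF.pow 2))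
  have hfin : IsFiniteMeasure P := (integrable_const_iff_isFiniteMeasure one_ne_zero).1
    (hint (fun _ => 1) continuous_const)
  have hprob : IsProbabilityMeasure P := by
    have h1 := hI fun _ => 1
    rw [integral_fst_zero (fun _ => 1) (integrableOn_parabRegion continuous_const)] at h1
    simp only [mul_one, integral_mass, integral_const, smul_eq_mul] at h1
    rw [isProbabilityMeasure_iff_real]
    linarith
  have hm : MeasurableSpace.comap (Prod.snd : ℝ × ℝ → ℝ) inferInstance ≤
      (inferInstance : MeasurableSpace (ℝ × ℝ)) := measurable_snd.comap_le
  have hcond : (fun q : ℝ × ℝ => condMean q.2) =ᵐ[P]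
      P[f | MeasurableSpace.comap Prod.snd inferInstance] := by
    refine ae_eq_condExp_of_forall_setIntegral_eq hm (hint f hfc)
      (fun _ _ _ => (hint _ hhc).integrableOn) ?_ ?_
    · rintro _ ⟨B, hB, rfl⟩ -
      have hB' : MeasurableSet ((Prod.snd : ℝ × ℝ → ℝ) ⁻¹' B) := measurable_snd hB
      rw [← integral_indicator hB', ← integral_indicator hB', hI, hI, setIntegral_condMean hB, hf]
    · exact (hc2.measurable.comp (comap_measurable _)).aestronglyMeasurable
  have hmean : ∫ q, f q ∂P = 3 / 2 := by
    rw [hI, hf, integral_fst_abs _ (integrableOn_parabRegion (by fun_prop)), integral_mean]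
    norm_num
  have hmean' : ∫ q, condMean q.2 ∂P = 3 / 2 := by
    rw [integral_congr_ae hcond, integral_condExp hm, hmean]
  have hvf : variance f P = 521 / 1260 - 4 / 35 * √2 := by
    rw [variance_eq_sub (hL2 f hfc), hmean, hI]
    simp only [hf, Pi.pow_apply, mul_pow]
    rw [integral_fst_sq (fun y => gFactor y ^ 2) (integrableOn_parabRegion (by fun_prop)),
      integral_sq]
    ring
  have hvh : variance (fun q : ℝ × ℝ => condMean q.2) P = 11 / 35 * √2 - 293 / 840 := by
    rw [variance_eq_sub (hL2 _ hhc), hmean', hI]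
    simp only [Pi.pow_apply]
    rw [integral_fst_zero (fun y => condMean y ^ 2) (integrableOn_parabRegion (by fun_prop)),
      integral_condMean_sq]
    ring
  rw [← variance_congr hcond, hvf, hvh]
  have hs : √2 < 2 := by
    rw [Real.sqrt_lt' (by norm_num)]; norm_num
  have hd1 : 521 / 1260 - 4 / 35 * √2 ≠ 0 := by linarith
  have hd2 : 144 * √2 - 521 ≠ 0 := by linarith
  rw [div_eq_div_iff hd1 hd2]
  ring
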